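/- Let k ≥ 1, let t ≥ 1, and let G = (V,E) be a finite simple graph with |V| ≥ k that contains no path of length t (i.e., no path with t edges). Then ∑_{i=1}^{k} λ_i(L(G)) ≤ |E| + k(t − 1). -/

import Mathlib

open Finset

/-- The `i`-th largest entry (1-indexed, so `i = 1` gives the maximum) of a tuple
`f : Fin n → ℝ`, counted with multiplicity. Junk value `0` outside the range `1 ≤ i ≤ n`. -/
noncomputable def ithLargest {n : ℕ} (f : Fin n → ℝ) (i : ℕ) : ℝ :=
  if h : 1 ≤ i ∧ i ≤ n then f (Tuple.sort f (Fin.rev ⟨i - 1, by omega⟩)) else 0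

/-- The eigenvalues of the Laplacian matrix of a finite simple graph `G`
(as a tuple indexed by the vertices, with multiplicity). -/
noncomputable def lapEigs {n : ℕ} (G : SimpleGraph (Fin n)) [DecidableRel G.Adj] :
    Fin n → ℝ :=
  (SimpleGraph.posSemidef_lapMatrix ℝ G).isHermitian.eigenvalues

/-- The degree sequence of `G`, as a real-valued tuple indexed by the vertices. -/
noncomputable def degTuple {n : ℕ} (G : SimpleGraph (Fin n)) [DecidableRel G.Adj] :
    Fin n → ℝ :=
  fun v => (G.degree v : ℝ)

/-!
Let `P` be the orthogonal projection onto the span of the chosen `k` eigenvectors, so that the sum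
of eigenvalues is `tr (L P)` and `tr P = k`. Repeatedly remove from `G` the starting vertex of a
longest path in what remains. All remaining neighbours of that vertex lie on the path, so there are
at most `t - 1` of them, and at most `t - 2` if the vertex also has a neighbour that was removed
earlier, because that neighbour extends the path. Charging each edge `uv`, which contributes
`P u u + P v v - 2 * P u v - 1` to `tr (L P) - |E|`, as `P u u` to the end `u` removed first and as
the rest to the other end, a vertex `v` receives at most `P v v` from its removed neighbours by
AM-GM and Cauchy–Schwarz for the `v`-th row of `P`, and hence at most `(t - 1) * P v v` altogether.
-/

section Order

variable {V : Type*}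

lemma exists_injOn_forall_filter_le {Q : Finset V → V → Prop}
    (hQ : ∀ S : Finset V, S.Nonempty → ∃ v ∈ S, Q S v) (S : Finset V) :
    ∃ r : V → ℕ, Set.InjOn r S ∧ ∀ v ∈ S, r v < #S ∧ Q {u ∈ S | r u ≤ r v} v := by
  classical
  induction S using Finset.strongInduction with
  | H S ih =>
    rcases S.eq_empty_or_nonempty with rfl | hS
    · exact ⟨fun _ ↦ 0, by simp⟩
    obtain ⟨v, hvS, hv⟩ := hQ S hS
    obtain ⟨r, hr_inj, hr⟩ := ih (S.erase v) (erase_ssubset hvS)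
    have hcard : #(S.erase v) + 1 = #S := card_erase_add_one hvS
    have hr_lt : ∀ u ∈ S.erase v, r u < #(S.erase v) := fun u hu ↦ (hr u hu).1
    refine ⟨Function.update r v #(S.erase v), ?_, fun u hu ↦ ?_⟩
    · intro u hu w hw huw
      rw [Function.update_apply, Function.update_apply] at huw
      grind [Set.InjOn]
    · obtain rfl | huv := eq_or_ne u v
      · have hfilter : {w ∈ S | Function.update r u #(S.erase u) w ≤ #(S.erase u)} = S :=
          filter_true_of_mem fun w hw ↦ by grind
        rw [Function.update_self, hfilter]
        exact ⟨by lia, hv⟩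
      · have huS : u ∈ S.erase v := mem_erase.2 ⟨huv, hu⟩
        have hfilter : {w ∈ S | Function.update r v #(S.erase v) w ≤ r u} =
            {w ∈ S.erase v | r w ≤ r u} := by
          ext w
          grind
        rw [Function.update_of_ne huv, hfilter]
        exact ⟨by grind, (hr u huS).2⟩

lemma exists_injective_forall_filter_le [Fintype V] {Q : Finset V → V → Prop}
    (hQ : ∀ S : Finset V, S.Nonempty → ∃ v ∈ S, Q S v) :
    ∃ r : V → ℕ, Function.Injective r ∧ ∀ v, Q {u | r u ≤ r v} v := by
  obtain ⟨r, hr_inj, hr⟩ := exists_injOn_forall_filter_le hQ univ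
  exact ⟨r, by simpa using hr_inj, fun v ↦ (hr v (mem_univ v)).2⟩

end Order

section Paths

variable {V : Type*} {G : SimpleGraph V}

lemma length_lt_of_forall_isPath_length_ne {t : ℕ}
    (hG : ∀ (u v : V) (p : G.Walk u v), p.IsPath → p.length ≠ t)
    {u v : V} {p : G.Walk u v} (hp : p.IsPath) : p.length < t := by
  by_contra! hle
  exact hG _ _ (p.take t) (hp.take t) (by rw [p.take_length, min_eq_left hle])

lemma card_le_length_of_subset_support {u v : V} {p : G.Walk u v} {A : Finset V}
    (huA : u ∉ A) (hA : ∀ w ∈ A, w ∈ p.support) : #A ≤ p.length := by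
  classical
  have hsub : insert u A ⊆ p.support.toFinset := by
    simpa [insert_subset_iff, subset_iff] using hA
  have hcard := (card_le_card hsub).trans p.support.toFinset_card_le
  rw [card_insert_of_notMem huA, p.length_support] at hcard
  lia

lemma exists_isPath_forall_adj_mem_support (G : SimpleGraph V) [Nonempty V] [Finite G.edgeSet] :
    ∃ (u v : V) (p : G.Walk u v), p.IsPath ∧ ∀ w, G.Adj u w → w ∈ p.support := by
  obtain ⟨u, v, p, hp, hmax⟩ :=
    SimpleGraph.Walk.exists_isPath_forall_isPath_length_le_length G
  refine ⟨u, v, p, hp, fun w huw ↦ ?_⟩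
  by_contra hw
  have hlonger := hmax w v (.cons huw.symm p) (hp.cons hw)
  simp at hlonger

lemma exists_isPath_subset_forall_adj_mem_support (G : SimpleGraph V) {S : Finset V}
    (hS : S.Nonempty) :
    ∃ u ∈ S, ∃ (v : V) (p : G.Walk u v), p.IsPath ∧ (∀ w ∈ p.support, w ∈ S) ∧
      ∀ w ∈ S, G.Adj u w → w ∈ p.support := by
  have : Nonempty (S : Set V) := hS.to_subtype
  obtain ⟨u, v, p, hp, hadj⟩ := exists_isPath_forall_adj_mem_support (G.induce (S : Set V))
  let ι := (SimpleGraph.Embedding.induce (G := G) (S : Set V)).toHom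
  refine ⟨ι u, u.2, ι v, p.map ι, hp.map Subtype.val_injective, ?_, fun w hwS huw ↦ ?_⟩
  · rw [p.support_map]
    exact List.forall_mem_map.2 fun w _ ↦ w.2
  · rw [p.support_map]
    exact List.mem_map_of_mem (hadj ⟨w, hwS⟩ huw)

lemma exists_card_filter_adj_lt [DecidableRel G.Adj] {t : ℕ}
    (hG : ∀ (u v : V) (p : G.Walk u v), p.IsPath → p.length < t)
    {S : Finset V} (hS : S.Nonempty) :
    ∃ v ∈ S, #{u ∈ S | G.Adj v u} < t ∧
      ((∃ w ∉ S, G.Adj v w) → #{u ∈ S | G.Adj v u} + 1 < t) := by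
  obtain ⟨v, hvS, z, p, hp, hpS, hadj⟩ := exists_isPath_subset_forall_adj_mem_support G hS
  have hcard : #{u ∈ S | G.Adj v u} ≤ p.length :=
    card_le_length_of_subset_support (by simp) (by simpa using hadj)
  refine ⟨v, hvS, hcard.trans_lt (hG _ _ p hp), fun ⟨w, hwS, hvw⟩ ↦ ?_⟩
  have hlonger := hG _ _ (.cons hvw.symm p) (hp.cons fun hw ↦ hwS (hpS w hw))
  rw [SimpleGraph.Walk.length_cons] at hlonger
  lia

end Paths

section Ranking

variable {V α : Type*} [Fintype V] [LinearOrder α]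

/-- The neighbours of `v` of smaller rank, where the vertices are ranked by `r`. For injective `r`
these are the out-neighbours of `v` when every edge is oriented towards its end of smaller rank. -/
def lowerNeighborFinset (G : SimpleGraph V) [DecidableRel G.Adj] (r : V → α) (v : V) : Finset V :=
  {u ∈ G.neighborFinset v | r u < r v}

/-- The neighbours of `v` of larger rank, where the vertices are ranked by `r`. For injective `r`
these are the in-neighbours of `v` when every edge is oriented towards its end of smaller rank. -/
def upperNeighborFinset (G : SimpleGraph V) [DecidableRel G.Adj] (r : V → α) (v : V) : Finset V :=
  {u ∈ G.neighborFinset v | r v < r u}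

variable {G : SimpleGraph V} [DecidableRel G.Adj] {r : V → α} {u v : V}

lemma mem_lowerNeighborFinset : u ∈ lowerNeighborFinset G r v ↔ G.Adj v u ∧ r u < r v := by
  simp [lowerNeighborFinset]

lemma mem_upperNeighborFinset : u ∈ upperNeighborFinset G r v ↔ G.Adj v u ∧ r v < r u := by
  simp [upperNeighborFinset]

lemma sum_sum_lowerNeighborFinset_comm {M : Type*} [AddCommMonoid M] (f : V → V → M) :
    ∑ v, ∑ u ∈ lowerNeighborFinset G r v, f v u = ∑ v, ∑ u ∈ upperNeighborFinset G r v, f u v :=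
  sum_comm' fun v u ↦ by
    simp [mem_lowerNeighborFinset, mem_upperNeighborFinset, G.adj_comm v u]

lemma sum_neighborFinset_eq_add (hr : Function.Injective r) {M : Type*} [AddCommMonoid M]
    (f : V → M) (v : V) :
    ∑ u ∈ G.neighborFinset v, f u =
      ∑ u ∈ lowerNeighborFinset G r v, f u + ∑ u ∈ upperNeighborFinset G r v, f u := by
  rw [← sum_filter_add_sum_filter_not _ (fun u ↦ r u < r v)]
  have hupper : {u ∈ G.neighborFinset v | ¬r u < r v} = upperNeighborFinset G r v :=
    filter_congr fun u hu ↦ by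
      have hne : r u ≠ r v := hr.ne (G.ne_of_adj ((G.mem_neighborFinset v u).1 hu)).symm
      rw [not_lt, hne.symm.le_iff_lt]
  rw [hupper, lowerNeighborFinset]

lemma sum_sum_neighborFinset_eq (hr : Function.Injective r) {M : Type*} [AddCommMonoid M]
    (f : V → V → M) :
    ∑ v, ∑ u ∈ G.neighborFinset v, f v u =
      ∑ v, ∑ u ∈ upperNeighborFinset G r v, (f v u + f u v) := by
  simp only [sum_neighborFinset_eq_add hr, sum_add_distrib, sum_sum_lowerNeighborFinset_comm]
  exact add_comm _ _

lemma degree_eq_card_add_card (hr : Function.Injective r) (v : V) :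
    G.degree v = #(lowerNeighborFinset G r v) + #(upperNeighborFinset G r v) := by
  simpa only [card_eq_sum_ones, ← G.card_neighborFinset_eq_degree] using
    sum_neighborFinset_eq_add (G := G) hr (fun _ ↦ 1) v

lemma card_edgeFinset_eq_sum_card_upperNeighborFinset (hr : Function.Injective r) :
    #G.edgeFinset = ∑ v, #(upperNeighborFinset G r v) := by
  have h := sum_sum_neighborFinset_eq (G := G) hr (fun _ _ ↦ 1)
  simp only [sum_const, smul_eq_mul, mul_one, SimpleGraph.card_neighborFinset_eq_degree,
    G.sum_degrees_eq_twice_card_edges, ← sum_mul] at h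
  lia

lemma exists_injective_card_lowerNeighborFinset_lt {t : ℕ}
    (hG : ∀ (u v : V) (p : G.Walk u v), p.IsPath → p.length < t) :
    ∃ r : V → ℕ, Function.Injective r ∧ ∀ v, #(lowerNeighborFinset G r v) < t ∧
      ((upperNeighborFinset G r v).Nonempty → #(lowerNeighborFinset G r v) + 1 < t) := by
  obtain ⟨r, hr, hcard⟩ :=
    exists_injective_forall_filter_le fun _ hS ↦ exists_card_filter_adj_lt hG hS
  refine ⟨r, hr, fun v ↦ ?_⟩
  have hlower : ({u ∈ ({u | r u ≤ r v} : Finset V) | G.Adj v u}) = lowerNeighborFinset G r v := by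
    ext u
    have hne : G.Adj v u → r u ≠ r v := fun h ↦ hr.ne h.ne'
    simp only [mem_filter, mem_univ, true_and, mem_lowerNeighborFinset]
    grind
  rw [← hlower]
  refine ⟨(hcard v).1, fun ⟨w, hw⟩ ↦ (hcard v).2 ⟨w, ?_, ?_⟩⟩
  · simpa using (mem_upperNeighborFinset.1 hw).2
  · exact (mem_upperNeighborFinset.1 hw).1

end Ranking

section Projection

variable {V : Type*} [Fintype V]

lemma sum_sq_row_of_isStarProjection {R : Type*} [CommSemiring R] [StarRing R] [TrivialStar R]
    {P : Matrix V V R} (hP : IsStarProjection P) (u : V) : ∑ v, P u v ^ 2 = P u u := by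
  conv_rhs => rw [← hP.isIdempotentElem.eq, Matrix.mul_apply]
  refine sum_congr rfl fun v _ ↦ ?_
  rw [sq, (Matrix.isHermitian_iff_isSymm.1 hP.isSelfAdjoint).apply u v]

variable {P : Matrix V V ℝ}

lemma sum_sq_row_le_of_isStarProjection (hP : IsStarProjection P) {u : V} {A : Finset V}
    (hu : u ∉ A) : ∑ v ∈ A, P u v ^ 2 ≤ P u u * (1 - P u u) := by
  classical
  have h : ∑ v ∈ insert u A, P u v ^ 2 ≤ P u u :=
    (sum_le_univ_sum_of_nonneg fun v ↦ sq_nonneg (P u v)).trans_eq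
      (sum_sq_row_of_isStarProjection hP u)
  rw [sum_insert hu] at h
  linarith

lemma diag_mem_Icc_of_isStarProjection (hP : IsStarProjection P) (u : V) :
    P u u ∈ Set.Icc 0 1 := by
  have hnonneg : 0 ≤ P u u :=
    sum_sq_row_of_isStarProjection hP u ▸ sum_nonneg fun v _ ↦ sq_nonneg (P u v)
  have hsq : 0 ≤ P u u * (1 - P u u) := by
    simpa using sum_sq_row_le_of_isStarProjection hP (notMem_empty u)
  exact ⟨hnonneg, by nlinarith⟩

lemma sum_diag_sub_le_of_isStarProjection (hP : IsStarProjection P) {u : V} {A : Finset V}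
    (hu : u ∉ A) : ∑ v ∈ A, (P u u - 2 * P u v - 1) ≤ P u u := by
  obtain ⟨hdiag₀, hdiag₁⟩ := diag_mem_Icc_of_isStarProjection hP u
  have hsq : (-∑ v ∈ A, P u v) ^ 2 ≤ #A * (1 - P u u) * P u u :=
    calc (-∑ v ∈ A, P u v) ^ 2 = (∑ v ∈ A, P u v) ^ 2 := neg_sq _
      _ ≤ #A * ∑ v ∈ A, P u v ^ 2 := sq_sum_le_card_mul_sum_sq
      _ ≤ #A * (P u u * (1 - P u u)) := by
        gcongr; exact sum_sq_row_le_of_isStarProjection hP hu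
      _ = #A * (1 - P u u) * P u u := by ring
  have hamgm := two_mul_le_add_of_sq_le_mul
    (mul_nonneg (Nat.cast_nonneg _) (sub_nonneg.2 hdiag₁)) hdiag₀ hsq
  simp only [sum_sub_distrib, sum_const, nsmul_eq_mul, ← mul_sum]
  linarith

end Projection

section Laplacian

variable {V : Type*} [Fintype V] [DecidableEq V] (G : SimpleGraph V) [DecidableRel G.Adj]

lemma trace_lapMatrix_mul {R : Type*} [NonAssocRing R] (P : Matrix V V R) :
    (G.lapMatrix R * P).trace =
      ∑ v, (G.degree v * P v v - ∑ u ∈ G.neighborFinset v, P u v) :=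
  sum_congr rfl fun v _ ↦ G.lapMatrix_mulVec_apply v (P.col v)

variable {G}

lemma trace_lapMatrix_mul_eq_card_edgeFinset_add {α R : Type*} [LinearOrder α] [CommRing R]
    {r : V → α} (hr : Function.Injective r) {P : Matrix V V R} (hP : P.IsSymm) :
    (G.lapMatrix R * P).trace = #G.edgeFinset +
      ∑ v, (#(lowerNeighborFinset G r v) * P v v +
        ∑ u ∈ upperNeighborFinset G r v, (P v v - 2 * P v u - 1)) := by
  have hoff : ∑ v, ∑ u ∈ G.neighborFinset v, P u v =
      ∑ v, ∑ u ∈ upperNeighborFinset G r v, 2 * P v u := by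
    rw [sum_sum_neighborFinset_eq hr]
    simp only [hP.apply, two_mul]
  rw [trace_lapMatrix_mul, sum_sub_distrib, hoff,
    card_edgeFinset_eq_sum_card_upperNeighborFinset hr, Nat.cast_sum, ← sum_sub_distrib,
    ← sum_add_distrib]
  refine sum_congr rfl fun v _ ↦ ?_
  simp only [degree_eq_card_add_card hr, sum_sub_distrib, sum_const, nsmul_eq_mul, Nat.cast_add]
  ring

theorem trace_lapMatrix_mul_le_of_isStarProjection {t : ℕ}
    (hG : ∀ (u v : V) (p : G.Walk u v), p.IsPath → p.length ≠ t)
    {P : Matrix V V ℝ} (hP : IsStarProjection P) :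
    (G.lapMatrix ℝ * P).trace ≤ #G.edgeFinset + ((t : ℝ) - 1) * P.trace := by
  obtain ⟨r, hr, hcard⟩ := exists_injective_card_lowerNeighborFinset_lt
    fun _ _ _ ↦ length_lt_of_forall_isPath_length_ne hG
  have hP_symm : P.IsSymm := Matrix.isHermitian_iff_isSymm.1 hP.isSelfAdjoint
  rw [trace_lapMatrix_mul_eq_card_edgeFinset_add hr hP_symm, Matrix.trace, mul_sum]
  gcongr with v
  have hdiag : 0 ≤ P v v := (diag_mem_Icc_of_isStarProjection hP v).1
  obtain hupper | hupper := (upperNeighborFinset G r v).eq_empty_or_nonempty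
  · have hlower : (#(lowerNeighborFinset G r v) : ℝ) ≤ t - 1 := by
      rw [le_sub_iff_add_le]
      exact_mod_cast (hcard v).1
    simpa [hupper] using mul_le_mul_of_nonneg_right hlower hdiag
  · have hlower : (#(lowerNeighborFinset G r v) : ℝ) + 1 ≤ t - 1 := by
      have := (hcard v).2 hupper
      rw [le_sub_iff_add_le]
      exact_mod_cast this
    calc _ ≤ #(lowerNeighborFinset G r v) * P v v + P v v := by
          gcongr
          exact sum_diag_sub_le_of_isStarProjection hP (by simp [mem_upperNeighborFinset])
      _ = (#(lowerNeighborFinset G r v) + 1) * P v v := by ring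
      _ ≤ _ := mul_le_mul_of_nonneg_right hlower hdiag

end Laplacian

section Spectral

variable {V 𝕜 : Type*} [Fintype V] [DecidableEq V] [RCLike 𝕜] {A : Matrix V V 𝕜}

/-- The orthogonal projection onto the span of the eigenvectors of the Hermitian matrix `A` whose
indices, in the enumeration of `Matrix.IsHermitian.eigenvalues`, lie in `s`. -/
noncomputable def eigenProjection (hA : A.IsHermitian) (s : Finset V) : Matrix V V 𝕜 :=
  Unitary.conjStarAlgAut 𝕜 _ hA.eigenvectorUnitary (Matrix.diagonal fun i ↦ if i ∈ s then 1 else 0)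

lemma trace_conjStarAlgAut (U : Matrix.unitaryGroup V 𝕜) (B : Matrix V V 𝕜) :
    (Unitary.conjStarAlgAut 𝕜 _ U B).trace = B.trace := by
  rw [Unitary.conjStarAlgAut_apply, Matrix.trace_mul_cycle, Unitary.coe_star_mul_self, one_mul]

lemma isStarProjection_eigenProjection (hA : A.IsHermitian) (s : Finset V) :
    IsStarProjection (eigenProjection hA s) := by
  refine IsStarProjection.map ⟨?_, ?_⟩ _
  · simp [IsIdempotentElem]
  · simp [IsSelfAdjoint, Matrix.star_eq_conjTranspose, Matrix.diagonal_conjTranspose,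
      apply_ite]

lemma trace_eigenProjection (hA : A.IsHermitian) (s : Finset V) :
    (eigenProjection hA s).trace = #s := by
  rw [eigenProjection, trace_conjStarAlgAut]
  simp

lemma trace_mul_eigenProjection (hA : A.IsHermitian) (s : Finset V) :
    (A * eigenProjection hA s).trace = ∑ i ∈ s, (hA.eigenvalues i : 𝕜) := by
  conv_lhs => enter [1, 1]; rw [hA.spectral_theorem]
  rw [eigenProjection, ← map_mul, trace_conjStarAlgAut]
  simp

end Spectral

lemma exists_card_eq_sum_ithLargest_eq {n k : ℕ} (hk : k ≤ n) (f : Fin n → ℝ) :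
    ∃ s : Finset (Fin n), #s = k ∧ ∑ i ∈ Icc 1 k, ithLargest f i = ∑ i ∈ s, f i := by
  let e : Fin k ↪ Fin n :=
    (Fin.castLEEmb hk).trans (Fin.revPerm.trans (Tuple.sort f)).toEmbedding
  refine ⟨univ.map e, by simp, ?_⟩
  have hterm (j : Fin k) : ithLargest f (j + 1) = f (e j) := by
    rw [ithLargest, dif_pos (by lia)]
    rfl
  rw [sum_map, ← sum_congr rfl fun j _ ↦ hterm j,
    Fin.sum_univ_eq_sum_range (fun i ↦ ithLargest f (i + 1)), range_eq_Ico,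
    sum_Ico_add' (ithLargest f) 0 k 1]
  rfl

theorem sum_lapEigs_le_of_no_path_general {V : Type*} [Fintype V] [DecidableEq V]
    (G : SimpleGraph V) [DecidableRel G.Adj] (t : ℕ)
    (hG : ∀ (u v : V) (p : G.Walk u v), p.IsPath → p.length ≠ t) (s : Finset V) :
    ∑ i ∈ s, (SimpleGraph.posSemidef_lapMatrix ℝ G).isHermitian.eigenvalues i ≤
      #G.edgeFinset + #s * ((t : ℝ) - 1) := by
  have hL := (SimpleGraph.posSemidef_lapMatrix ℝ G).isHermitian
  calc ∑ i ∈ s, hL.eigenvalues i = (G.lapMatrix ℝ * eigenProjection hL s).trace :=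
        (trace_mul_eigenProjection hL s).symm
    _ ≤ #G.edgeFinset + ((t : ℝ) - 1) * (eigenProjection hL s).trace :=
        trace_lapMatrix_mul_le_of_isStarProjection hG (isStarProjection_eigenProjection hL s)
    _ = #G.edgeFinset + #s * ((t : ℝ) - 1) := by rw [trace_eigenProjection, mul_comm]

/-- for `k ≥ 1`, `t ≥ 1`, and a graph `G` with at least `k` vertices
containing no path with `t` edges, `∑_{i=1}^k λ_i(L(G)) ≤ |E| + k(t − 1)`. -/
theorem sum_lapEigs_le_of_no_path {n : ℕ} (G : SimpleGraph (Fin n)) [DecidableRel G.Adj]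
    (t : ℕ) (ht : 1 ≤ t)
    (hG : ∀ (u v : Fin n) (p : G.Walk u v), p.IsPath → p.length ≠ t)
    (k : ℕ) (hk1 : 1 ≤ k) (hk2 : k ≤ n) :
    ∑ i ∈ Finset.Icc 1 k, ithLargest (lapEigs G) i ≤
      (G.edgeFinset.card : ℝ) + (k : ℝ) * ((t : ℝ) - 1) := by
  obtain ⟨s, rfl, hs⟩ := exists_card_eq_sum_ithLargest_eq hk2 (lapEigs G)
  exact hs ▸ sum_lapEigs_le_of_no_path_general G t hG s
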